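/- arXiv:2602.03756 — 2 statements merged into one kernel-verified Lean document; each statement's English description precedes it below -/
import Mathlib

section
/- Fix n ≥ 1 data points with observed times t_i > 0 and censoring indicators δ_i ∈ ℝ (i = 1,…,n), time-level covariate vectors x̃_i ∈ ℝ^p and hazard-level covariate vectors x_i ∈ ℝ^q. Let f, f', f'', F : ℝ → ℝ satisfy: for all x, HasDerivAt f (f' x) x, HasDerivAt f' (f'' x) x, and HasDerivAt F (f x) x, and f(−x) = f(x) for all x. Fix ν ∈ ℝ, θ ∈ ℝ^p, η ∈ ℝ^q, and set u_i(θ₀) = e^ν log t_i − x̃_iᵀθ − θ₀ and v_i = exp(e^{−ν} x̃_iᵀθ − x_iᵀη). Assume f(u_i(θ₀)) > 0 and F(−u_i(θ₀)) > 0 for all θ₀ ∈ ℝ and all i. Then the second derivative of the map θ₀ ↦ ℓ(ν, θ₀, θ, η) at any θ₀ equals Σ_i δ_i [f''(u_i)/f(u_i) − (f'(u_i)/f(u_i))²] − Σ_i [f'(u_i)/F(−u_i) + (f(u_i)/F(−u_i))²] (v_i − δ_i), where u_i = u_i(θ₀). -/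
open Real

/-!
Since `f` is even, `S u = F (-u)` is a survival function with density `f`, that is, `S' = -f`.
Each term of `ℓ` that involves `θ₀` is then a multiple of `log (g (c - θ₀))` with `g = f` or
`g = S`. The reflection `s ↦ c - s` preserves second derivatives, and
`(log g)'' = g'' / g - (g' / g)²`, where `g'' = -f'` in the case `g = S`.
-/

open scoped Topology

/-- `HasSecondDerivAt g g' g'' a` says that `g` has derivative `g'` near `a` and that `g''` is the
second derivative of `g` at `a`. Unlike `ContDiffAt 𝕜 2 g a`, it does not ask for a second
derivative away from `a`, let alone a continuous one. -/
structure HasSecondDerivAt {𝕜 E : Type*} [NontriviallyNormedField 𝕜] [NormedAddCommGroup E]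
    [NormedSpace 𝕜 E] (g g' : 𝕜 → E) (g'' : E) (a : 𝕜) : Prop where
  eventually_hasDerivAt : ∀ᶠ s in 𝓝 a, HasDerivAt g (g' s) s
  hasDerivAt_deriv : HasDerivAt g' g'' a

namespace HasSecondDerivAt

section NormedSpace

variable {𝕜 E : Type*} [NontriviallyNormedField 𝕜] [NormedAddCommGroup E] [NormedSpace 𝕜 E]
  {g g' h h' : 𝕜 → E} {g'' h'' : E} {a : 𝕜}

theorem deriv_deriv (hg : HasSecondDerivAt g g' g'' a) : deriv (deriv g) a = g'' := by
  have deriv_eq : deriv g =ᶠ[𝓝 a] g' := hg.eventually_hasDerivAt.mono fun _ hs ↦ hs.deriv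
  exact deriv_eq.deriv_eq.trans hg.hasDerivAt_deriv.deriv

theorem const_add (c : E) (hg : HasSecondDerivAt g g' g'' a) :
    HasSecondDerivAt (fun s ↦ c + g s) g' g'' a where
  eventually_hasDerivAt := hg.eventually_hasDerivAt.mono fun _ hs ↦ hs.const_add c
  hasDerivAt_deriv := hg.hasDerivAt_deriv

theorem fun_add (hg : HasSecondDerivAt g g' g'' a) (hh : HasSecondDerivAt h h' h'' a) :
    HasSecondDerivAt (fun s ↦ g s + h s) (fun s ↦ g' s + h' s) (g'' + h'') a where
  eventually_hasDerivAt := by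
    filter_upwards [hg.eventually_hasDerivAt, hh.eventually_hasDerivAt] with s hgs hhs
    exact hgs.fun_add hhs
  hasDerivAt_deriv := hg.hasDerivAt_deriv.fun_add hh.hasDerivAt_deriv

theorem fun_sum {ι : Type*} {u : Finset ι} {G G' : ι → 𝕜 → E} {G'' : ι → E}
    (hG : ∀ i ∈ u, HasSecondDerivAt (G i) (G' i) (G'' i) a) :
    HasSecondDerivAt (fun s ↦ ∑ i ∈ u, G i s) (fun s ↦ ∑ i ∈ u, G' i s) (∑ i ∈ u, G'' i) a where
  eventually_hasDerivAt := by
    have eventually_forall : ∀ᶠ s in 𝓝 a, ∀ i ∈ u, HasDerivAt (G i) (G' i s) s :=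
      u.eventually_all.mpr fun i hi ↦ (hG i hi).eventually_hasDerivAt
    exact eventually_forall.mono fun _ hs ↦ HasDerivAt.fun_sum hs
  hasDerivAt_deriv := HasDerivAt.fun_sum fun i hi ↦ (hG i hi).hasDerivAt_deriv

theorem comp_const_sub {c : 𝕜} (hg : HasSecondDerivAt g g' g'' (c - a)) :
    HasSecondDerivAt (fun s ↦ g (c - s)) (fun s ↦ -g' (c - s)) g'' a where
  eventually_hasDerivAt := by
    have tendsto_sub : Filter.Tendsto (fun s ↦ c - s) (𝓝 a) (𝓝 (c - a)) :=
      tendsto_const_nhds.sub Filter.tendsto_id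
    exact (tendsto_sub.eventually hg.eventually_hasDerivAt).mono fun s hs ↦ hs.comp_const_sub c s
  hasDerivAt_deriv := by
    simpa only [neg_neg] using (hg.hasDerivAt_deriv.comp_const_sub c a).fun_neg

end NormedSpace

section NormedAlgebra

variable {𝕜 A : Type*} [NontriviallyNormedField 𝕜] [NormedRing A] [NormedAlgebra 𝕜 A]
  {g g' : 𝕜 → A} {g'' : A} {a : 𝕜}

theorem const_mul (c : A) (hg : HasSecondDerivAt g g' g'' a) :
    HasSecondDerivAt (fun s ↦ c * g s) (fun s ↦ c * g' s) (c * g'') a where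
  eventually_hasDerivAt := hg.eventually_hasDerivAt.mono fun _ hs ↦ hs.const_mul c
  hasDerivAt_deriv := hg.hasDerivAt_deriv.const_mul c

theorem mul_const (hg : HasSecondDerivAt g g' g'' a) (c : A) :
    HasSecondDerivAt (fun s ↦ g s * c) (fun s ↦ g' s * c) (g'' * c) a where
  eventually_hasDerivAt := hg.eventually_hasDerivAt.mono fun _ hs ↦ hs.mul_const c
  hasDerivAt_deriv := hg.hasDerivAt_deriv.mul_const c

end NormedAlgebra

theorem log {g g' : ℝ → ℝ} {g'' a : ℝ} (hg : HasSecondDerivAt g g' g'' a) (hga : g a ≠ 0) :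
    HasSecondDerivAt (fun s ↦ Real.log (g s)) (fun s ↦ g' s / g s)
      (g'' / g a - (g' a / g a) ^ 2) a := by
  have hasDerivAt_g : HasDerivAt g (g' a) a := hg.eventually_hasDerivAt.self_of_nhds
  have eventually_ne : ∀ᶠ s in 𝓝 a, g s ≠ 0 := hasDerivAt_g.continuousAt.eventually_ne hga
  constructor
  · filter_upwards [hg.eventually_hasDerivAt, eventually_ne] with s hs hgs
    exact hs.log hgs
  · have quotient_rule :
        g'' / g a - (g' a / g a) ^ 2 = (g'' * g a - g' a * g' a) / g a ^ 2 := by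
      field_simp
    exact quotient_rule ▸ hg.hasDerivAt_deriv.fun_div hasDerivAt_g hga

end HasSecondDerivAt

theorem hasDerivAt_comp_neg_of_even {𝕜 E : Type*} [NontriviallyNormedField 𝕜]
    [NormedAddCommGroup E] [NormedSpace 𝕜 E] {F f : 𝕜 → E} {s : 𝕜}
    (hF : HasDerivAt F (f (-s)) (-s)) (hf : f.Even) :
    HasDerivAt (fun r ↦ F (-r)) (-f s) s := by
  have hasDerivAt_zero_sub : HasDerivAt F (f s) (0 - s) := by rwa [zero_sub, ← hf s]
  simpa only [zero_sub] using hasDerivAt_zero_sub.comp_const_sub 0 s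

/-- In the GH model `c i = e^ν log tᵢ - x̃ᵢᵀθ`, `w i = vᵢ - δᵢ`, `S u = F (-u)`, and `K` collects
the terms of `ℓ` that are free of `θ₀`. -/
theorem GH_loglik_deriv2_theta0_general {ι : Type*} [Fintype ι] {f f' f'' S : ℝ → ℝ}
    {c : ι → ℝ} {θ₀ : ℝ}
    (hf : ∀ i, ∀ᶠ s in 𝓝 (c i - θ₀), HasDerivAt f (f' s) s)
    (hf' : ∀ i, HasDerivAt f' (f'' (c i - θ₀)) (c i - θ₀))
    (hS : ∀ i, ∀ᶠ s in 𝓝 (c i - θ₀), HasDerivAt S (-f s) s)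
    (hf_pos : ∀ i, 0 < f (c i - θ₀)) (hS_pos : ∀ i, 0 < S (c i - θ₀))
    (K : ℝ) (δ w : ι → ℝ) :
    deriv (deriv fun s ↦
        K + (∑ i, δ i * Real.log (f (c i - s))) + ∑ i, Real.log (S (c i - s)) * w i) θ₀
      = (∑ i, δ i * (f'' (c i - θ₀) / f (c i - θ₀) - (f' (c i - θ₀) / f (c i - θ₀)) ^ 2))
        - ∑ i, (f' (c i - θ₀) / S (c i - θ₀) + (f (c i - θ₀) / S (c i - θ₀)) ^ 2) * w i := by
  have density (i : ι) : HasSecondDerivAt f f' (f'' (c i - θ₀)) (c i - θ₀) :=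
    ⟨hf i, hf' i⟩
  have survival (i : ι) : HasSecondDerivAt S (fun s ↦ -f s) (-f' (c i - θ₀)) (c i - θ₀) :=
    ⟨hS i, (hf i).self_of_nhds.fun_neg⟩
  have log_density (i : ι) := ((density i).log (hf_pos i).ne').comp_const_sub
  have log_survival (i : ι) := ((survival i).log (hS_pos i).ne').comp_const_sub
  have loglik := ((HasSecondDerivAt.fun_sum fun i (_ : i ∈ Finset.univ) ↦
      (log_density i).const_mul (δ i)).const_add K).fun_add
    (HasSecondDerivAt.fun_sum fun i (_ : i ∈ Finset.univ) ↦ (log_survival i).mul_const (w i))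
  rw [loglik.deriv_deriv, sub_eq_add_neg, ← Finset.sum_neg_distrib]
  congr! 2
  ring

/-- The second derivative of the GH log-likelihood with respect to `θ₀` equals
`∑ δᵢ [f''(uᵢ)/f(uᵢ) - (f'(uᵢ)/f(uᵢ))²] - ∑ [f'(uᵢ)/F(-uᵢ) + (f(uᵢ)/F(-uᵢ))²](vᵢ - δᵢ)`. -/
theorem GH_loglik_deriv2_theta0
    (n p q : ℕ) (hn : 1 ≤ n)
    (t δ : Fin n → ℝ) (ht : ∀ i, 0 < t i)
    (xt : Fin n → Fin p → ℝ) (x : Fin n → Fin q → ℝ)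
    (f f' f'' F : ℝ → ℝ)
    (hf : ∀ s, HasDerivAt f (f' s) s) (hf' : ∀ s, HasDerivAt f' (f'' s) s)
    (hF : ∀ s, HasDerivAt F (f s) s)
    (hfsym : ∀ s, f (-s) = f s)
    (ν : ℝ) (θ : Fin p → ℝ) (η : Fin q → ℝ)
    (v : Fin n → ℝ)
    (hv : ∀ i, v i = Real.exp (Real.exp (-ν) * (∑ j, xt i j * θ j) - (∑ j, x i j * η j)))
    (hfu : ∀ (s : ℝ) (i : Fin n),
      0 < f (Real.exp ν * Real.log (t i) - (∑ j, xt i j * θ j) - s))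
    (hFu : ∀ (s : ℝ) (i : Fin n),
      0 < F (-(Real.exp ν * Real.log (t i) - (∑ j, xt i j * θ j) - s)))
    (θ₀ : ℝ) (u : Fin n → ℝ)
    (hu : ∀ i, u i = Real.exp ν * Real.log (t i) - (∑ j, xt i j * θ j) - θ₀) :
    deriv (deriv
      (fun s : ℝ =>
        (∑ i, δ i) * ν - (∑ i, δ i * Real.log (t i))
        + (∑ i, δ i * ((∑ j, xt i j * θ j) * Real.exp (-ν) - (∑ j, x i j * η j)))
        + (∑ i, δ i * Real.log (f (Real.exp ν * Real.log (t i) - (∑ j, xt i j * θ j) - s)))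
        + (∑ i, Real.log (F (-(Real.exp ν * Real.log (t i) - (∑ j, xt i j * θ j) - s)))
            * (v i - δ i)))) θ₀
    =
    (∑ i, δ i * (f'' (u i) / f (u i) - (f' (u i) / f (u i)) ^ 2))
      - (∑ i, (f' (u i) / F (-u i) + (f (u i) / F (-u i)) ^ 2) * (v i - δ i)) := by
  simp only [hu]
  exact GH_loglik_deriv2_theta0_general (fun _ ↦ .of_forall hf) (fun _ ↦ hf' _)
    (fun _ ↦ .of_forall fun s ↦ hasDerivAt_comp_neg_of_even (hF (-s)) hfsym) (hfu θ₀) (hFu θ₀) _ _ _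
end

section
/- Fix n ≥ 1 data points with observed times t_i > 0 and censoring indicators δ_i ∈ ℝ (i = 1,…,n), time-level covariate vectors x̃_i ∈ ℝ^p and hazard-level covariate vectors x_i ∈ ℝ^q. Let f, F : ℝ → ℝ and fix ν, θ₀ ∈ ℝ, θ ∈ ℝ^p; set u_i = e^ν log t_i − x̃_iᵀθ − θ₀ and, for η ∈ ℝ^q, v_i(η) = exp(e^{−ν} x̃_iᵀθ − x_iᵀη). Assume F(−u_i) > 0 for all i. Then for all coordinates j, k ∈ {1,…,q}, the second partial derivative ∂²ℓ/∂η_j∂η_k of the map η ↦ ℓ(ν, θ₀, θ, η) at any η equals Σ_i log F(−u_i) · v_i(η) · x_{ij} x_{ik}, where x_{ij} denotes the j-th coordinate of x_i. -/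
open Real

/-!
As a function of `η`, the log-likelihood is an affine function plus `∑ i, log F(-uᵢ) * vᵢ(η)`.
Since `∂vᵢ/∂ηₖ = -xᵢₖ vᵢ`, the score in `ηₖ` is a constant plus a linear combination of the `vᵢ`,
and differentiating once more brings down a second factor `-xᵢⱼ`.
-/

section

variable {ι τ κ : Type*} [Fintype τ] [Fintype κ]

/-- The standardized log-time residual `u = e^ν log t - x̃ᵀθ - θ₀` of an observation with time `t`
and time-level covariates `xt`. -/
noncomputable def ghResidual (t : ℝ) (xt : τ → ℝ) (ν θ₀ : ℝ) (θ : τ → ℝ) : ℝ :=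
  exp ν * log t - xt ⬝ᵥ θ - θ₀

/-- The hazard factor `v = exp (e^{-ν} x̃ᵀθ - xᵀη)` of an observation with time-level covariates
`xt` and hazard-level covariates `x`. -/
noncomputable def ghHazardFactor (xt : τ → ℝ) (x : κ → ℝ) (ν : ℝ) (θ : τ → ℝ) (η : κ → ℝ) : ℝ :=
  exp (exp (-ν) * (xt ⬝ᵥ θ) - x ⬝ᵥ η)

/-- The GH log-likelihood `ℓ(ν, θ₀, θ, η)` of the observations `(t i, δ i, xt i, x i)`.
Since `Real.log` is total, the formula is meaningful only where `t i`, `f (u i)` (for `δ i ≠ 0`) and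
`F (-u i)` are positive, `u i` being the residual. -/
noncomputable def ghLogLik [Fintype ι] (t δ : ι → ℝ) (xt : ι → τ → ℝ) (x : ι → κ → ℝ)
    (f F : ℝ → ℝ) (ν θ₀ : ℝ) (θ : τ → ℝ) (η : κ → ℝ) : ℝ :=
  (∑ i, δ i) * ν - (∑ i, δ i * log (t i))
    + (∑ i, δ i * ((xt i ⬝ᵥ θ) * exp (-ν) - x i ⬝ᵥ η))
    + (∑ i, δ i * log (f (ghResidual (t i) (xt i) ν θ₀ θ)))
    + (∑ i, log (F (-ghResidual (t i) (xt i) ν θ₀ θ))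
        * (ghHazardFactor (xt i) (x i) ν θ η - δ i))

variable [DecidableEq κ]

theorem hasDerivAt_dotProduct_update {𝕜 : Type*} [NontriviallyNormedField 𝕜]
    (a y : κ → 𝕜) (k : κ) (r : 𝕜) :
    HasDerivAt (fun r ↦ a ⬝ᵥ Function.update y k r) (a k) r := by
  have hcoord (l : κ) : HasDerivAt (fun r ↦ a l * Function.update y k r l)
      (a l * (Pi.single k 1 : κ → 𝕜) l) r :=
    (hasDerivAt_pi.1 (hasDerivAt_update y k r) l).const_mul (a l)
  exact (HasDerivAt.fun_sum fun l _ ↦ hcoord l).congr_deriv (dotProduct_single_one a k)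

theorem hasDerivAt_ghHazardFactor_update (xt : τ → ℝ) (x : κ → ℝ) (ν : ℝ) (θ : τ → ℝ)
    (η : κ → ℝ) (k : κ) :
    HasDerivAt (fun r ↦ ghHazardFactor xt x ν θ (Function.update η k r))
      (ghHazardFactor xt x ν θ η * -x k) (η k) := by
  simpa only [ghHazardFactor, Function.update_eq_self] using
    ((hasDerivAt_dotProduct_update x η k (η k)).const_sub (exp (-ν) * (xt ⬝ᵥ θ))).exp

variable [Fintype ι]

theorem hasDerivAt_sum_mul_ghHazardFactor_update (w : ι → ℝ) (xt : ι → τ → ℝ) (x : ι → κ → ℝ)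
    (ν : ℝ) (θ : τ → ℝ) (η : κ → ℝ) (k : κ) :
    HasDerivAt (fun r ↦ ∑ i, w i * ghHazardFactor (xt i) (x i) ν θ (Function.update η k r))
      (∑ i, w i * -x i k * ghHazardFactor (xt i) (x i) ν θ η) (η k) :=
  HasDerivAt.fun_sum fun i _ ↦
    ((hasDerivAt_ghHazardFactor_update (xt i) (x i) ν θ η k).const_mul (w i)).congr_deriv (by ring)

theorem hasDerivAt_ghLogLik_update (t δ : ι → ℝ) (xt : ι → τ → ℝ) (x : ι → κ → ℝ)
    (f F : ℝ → ℝ) (ν θ₀ : ℝ) (θ : τ → ℝ) (η : κ → ℝ) (k : κ) :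
    HasDerivAt (fun r ↦ ghLogLik t δ xt x f F ν θ₀ θ (Function.update η k r))
      ((∑ i, δ i * -x i k)
        + ∑ i, log (F (-ghResidual (t i) (xt i) ν θ₀ θ)) * -x i k
            * ghHazardFactor (xt i) (x i) ν θ η) (η k) := by
  have hlinear : HasDerivAt
      (fun r ↦ ∑ i, δ i * ((xt i ⬝ᵥ θ) * exp (-ν) - x i ⬝ᵥ Function.update η k r))
      (∑ i, δ i * -x i k) (η k) :=
    HasDerivAt.fun_sum fun i _ ↦
      ((hasDerivAt_dotProduct_update (x i) η k (η k)).const_sub _).const_mul (δ i)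
  have hhazard := hasDerivAt_sum_mul_ghHazardFactor_update
    (fun i ↦ log (F (-ghResidual (t i) (xt i) ν θ₀ θ))) xt x ν θ η k
  simp only [ghLogLik, mul_sub (log _), Finset.sum_sub_distrib (fun _ ↦ log _ * _)]
  exact ((hlinear.const_add _).add_const _).add (hhazard.sub_const _)

end

/-- The second partial derivative `∂²ℓ/∂ηⱼ∂ηₖ` of the GH log-likelihood with
respect to the hazard-level coefficients equals
`∑ log F(-uᵢ) · vᵢ(η) · xᵢⱼ xᵢₖ`. -/
theorem GH_loglik_deriv2_eta
    (n p q : ℕ) (hn : 1 ≤ n)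
    (t δ : Fin n → ℝ) (ht : ∀ i, 0 < t i)
    (xt : Fin n → Fin p → ℝ) (x : Fin n → Fin q → ℝ)
    (f F : ℝ → ℝ)
    (ν θ₀ : ℝ) (θ : Fin p → ℝ)
    (u : Fin n → ℝ)
    (hu : ∀ i, u i = Real.exp ν * Real.log (t i) - (∑ l, xt i l * θ l) - θ₀)
    (hFu : ∀ i, 0 < F (-u i))
    (η : Fin q → ℝ) (j k : Fin q) :
    deriv (fun s : ℝ =>
      deriv (fun r : ℝ =>
        (fun η' : Fin q → ℝ =>
          (∑ i, δ i) * ν - (∑ i, δ i * Real.log (t i))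
          + (∑ i, δ i * ((∑ l, xt i l * θ l) * Real.exp (-ν) - (∑ l, x i l * η' l)))
          + (∑ i, δ i * Real.log (f (u i)))
          + (∑ i, Real.log (F (-u i))
              * (Real.exp (Real.exp (-ν) * (∑ l, xt i l * θ l) - (∑ l, x i l * η' l))
                  - δ i)))
          (Function.update (Function.update η j s) k r))
        (Function.update η j s k)) (η j)
    =
    ∑ i, Real.log (F (-u i))
      * Real.exp (Real.exp (-ν) * (∑ l, xt i l * θ l) - (∑ l, x i l * η l))
      * (x i j * x i k) := by
  obtain rfl : u = fun i ↦ ghResidual (t i) (xt i) ν θ₀ θ := funext hu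
  let w (i : Fin n) : ℝ := log (F (-ghResidual (t i) (xt i) ν θ₀ θ))
  let v (i : Fin n) (y : Fin q → ℝ) : ℝ := ghHazardFactor (xt i) (x i) ν θ y
  have score (y : Fin q → ℝ) :
      deriv (fun r ↦ ghLogLik t δ xt x f F ν θ₀ θ (Function.update y k r)) (y k)
        = (∑ i, δ i * -x i k) + ∑ i, w i * -x i k * v i y :=
    (hasDerivAt_ghLogLik_update t δ xt x f F ν θ₀ θ y k).deriv
  have hweighted := hasDerivAt_sum_mul_ghHazardFactor_update (fun i ↦ w i * -x i k) xt x ν θ η j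
  calc
    _ = deriv (fun s ↦ (∑ i, δ i * -x i k)
          + ∑ i, w i * -x i k * v i (Function.update η j s)) (η j) :=
      congrArg (deriv · (η j)) (funext fun s ↦ score (Function.update η j s))
    _ = ∑ i, w i * -x i k * -x i j * v i η := (hweighted.const_add _).deriv
    _ = ∑ i, w i * v i η * (x i j * x i k) :=
      Finset.sum_congr rfl fun i _ ↦ by ring
end
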